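/- Let k be an algebraically closed field of characteristic zero, n ≥ 2, ζ ∈ k a primitive n-th root of unity, and 1 ≤ i ≤ n−1. Then there is NO map v : (ZMod n)² → kˣ such that for all a,b,c ∈ ZMod n: ζ^{i · val(a) · [val(b) + val(c) ≥ n]} = v(b,c) · v(a+b, c)⁻¹ · v(a, b+c) · v(a,b)⁻¹. In other words, the 3-cocycle ω_{ζ^i} on the cyclic group ZMod n with values in kˣ is not a coboundary. -/

import Mathlib

/-!
On a finite group, `∏ b, ω(a, b, c)` is `1` for every coboundary `ω`, since translating `b`
permutes the group. For the standard cocycle with parameter `q`, the factor `b` contributes `q ^ a`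
exactly when `b + c` carries, which happens for `c` values of `b`, so the product is `q ^ (a * c)`;
at `a = c = 1` it detects `q`.
-/

section Coboundary

variable {G M : Type*} [AddGroup G] [CommGroup M]

/-- The coboundary `∂²v` of a 2-cochain `v` on an additive group, with multiplicative coefficients
and trivial action. -/
def twoCochainCoboundary (v : G → G → M) (a b c : G) : M :=
  v b c * (v (a + b) c)⁻¹ * v a (b + c) * (v a b)⁻¹

theorem prod_twoCochainCoboundary [Fintype G] (v : G → G → M) (a c : G) :
    ∏ b, twoCochainCoboundary v a b c = 1 := by
  have translate_left : ∏ b, v (a + b) c = ∏ b, v b c :=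
    Equiv.prod_comp (Equiv.addLeft a) (v · c)
  have translate_right : ∏ b, v a (b + c) = ∏ b, v a b :=
    Equiv.prod_comp (Equiv.addRight c) (v a)
  simp only [twoCochainCoboundary, Finset.prod_mul_distrib, Finset.prod_inv_distrib,
    translate_left, translate_right, mul_inv_cancel, one_mul]

end Coboundary

section StandardThreeCocycle

variable {n : ℕ}

/-- The carry `[val(b) + val(c) ≥ n]` in the addition of canonical representatives modulo `n`,
as a natural number. -/
def valAddCarry (b c : ZMod n) : ℕ :=
  if n ≤ b.val + c.val then 1 else 0

theorem val_add_add_mul_valAddCarry [NeZero n] (b c : ZMod n) :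
    (b + c).val + n * valAddCarry b c = b.val + c.val := by
  unfold valAddCarry
  split_ifs with h
  · rw [mul_one, ← ZMod.val_add_val_of_le h]
  · rw [mul_zero, add_zero, ZMod.val_add_of_lt (not_le.mp h)]

theorem sum_valAddCarry [NeZero n] (c : ZMod n) : ∑ b, valAddCarry b c = c.val := by
  have translate : ∑ b : ZMod n, (b + c).val = ∑ b : ZMod n, b.val :=
    Equiv.sum_comp (Equiv.addRight c) ZMod.val
  have sum_eq : ∑ b : ZMod n, b.val + n * ∑ b, valAddCarry b c =
      ∑ b : ZMod n, b.val + n * c.val :=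
    calc
      _ = ∑ b, ((b + c).val + n * valAddCarry b c) := by
        rw [Finset.sum_add_distrib, translate, Finset.mul_sum]
      _ = ∑ b : ZMod n, (b.val + c.val) := by simp only [val_add_add_mul_valAddCarry]
      _ = _ := by
        rw [Finset.sum_add_distrib, Finset.sum_const, Finset.card_univ, ZMod.card, smul_eq_mul]
  exact Nat.eq_of_mul_eq_mul_left (NeZero.pos n) (Nat.add_left_cancel sum_eq)

variable {M : Type*}

/-- The standard 3-cochain `ω_q` on `ZMod n`; it is a cocycle when `q ^ n = 1`. -/
def standardThreeCocycle [Monoid M] (q : M) (a b c : ZMod n) : M :=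
  q ^ (a.val * valAddCarry b c)

theorem prod_standardThreeCocycle [NeZero n] [CommMonoid M] (q : M) (a c : ZMod n) :
    ∏ b, standardThreeCocycle q a b c = q ^ (a.val * c.val) := by
  simp only [standardThreeCocycle]
  rw [Finset.prod_pow_eq_pow_sum, ← Finset.mul_sum, sum_valAddCarry]

theorem standard_three_cocycle_not_coboundary_general [CommGroup M] (hn : 2 ≤ n) {q : M}
    (hq : q ≠ 1) :
    ¬ ∃ v : ZMod n → ZMod n → M,
        ∀ a b c, standardThreeCocycle q a b c = twoCochainCoboundary v a b c := by
  rintro ⟨v, hv⟩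
  have : Fact (1 < n) := ⟨hn⟩
  have : NeZero n := ⟨by lia⟩
  apply hq
  calc
    q = q ^ ((1 : ZMod n).val * (1 : ZMod n).val) := by rw [ZMod.val_one, mul_one, pow_one]
    _ = ∏ b, standardThreeCocycle q 1 b 1 := (prod_standardThreeCocycle q 1 1).symm
    _ = ∏ b, twoCochainCoboundary v 1 b 1 := Finset.prod_congr rfl fun b _ => hv 1 b 1
    _ = 1 := prod_twoCochainCoboundary v 1 1

end StandardThreeCocycle

/-- Corollary 5.3 (cor: not quasi iso to trivial): for `1 ≤ i ≤ n-1`, the 3-cocycle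
`ω_{ζ^i}` on `ZMod n` with values in `kˣ` is not a coboundary. -/
theorem standard_three_cocycle_not_coboundary
    {k : Type*} [Field k] [IsAlgClosed k] [CharZero k]
    (n : ℕ) (hn : 2 ≤ n) (ζ : kˣ) (hζ : IsPrimitiveRoot ζ n)
    (i : ℕ) (hi1 : 1 ≤ i) (hi2 : i ≤ n - 1) :
    ¬ ∃ v : ZMod n → ZMod n → kˣ,
        ∀ a b c : ZMod n,
          ζ ^ (i * a.val * (if n ≤ b.val + c.val then 1 else 0)) =
            v b c * (v (a + b) c)⁻¹ * v a (b + c) * (v a b)⁻¹ := by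
  simpa only [standardThreeCocycle, valAddCarry, twoCochainCoboundary, ← pow_mul, mul_assoc] using
    standard_three_cocycle_not_coboundary_general hn
      (hζ.pow_ne_one_of_pos_of_lt (by lia : i ≠ 0) (by lia))
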